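/- Let n, m ≥ 0 be integers, let k be an integer with m ≤ k and 2k ≤ n+m−1, and let a be a real number with a ≠ 0 and a ≠ 1. Then (−a)^{n+m+1} · (1−a)^{k−m−n} · ((2n+2m−2k)! · (n−k−1)!)/((n+m−2k−1)! · (k−m)!) · Σ_{s=0}^{n+m+1} ((n−k)_s (−n−m−1)_s)/((n+m−2k)_s · s!) · a^{−s} = Σ_{i=0}^{m+n−k} a^{i} · C(m+n−k, i) · (−m+k+i+1)_{2(m+n−k−i)} · (1−a)^{−i} · Σ_{ℓ=0}^{i} ((k+2)_ℓ (−k−1)_ℓ (−i)_ℓ)/((−m−i)_ℓ · ℓ!) · (m−i+1+ℓ)_{2i−ℓ} · (1−a)^{ℓ}, where C(p, q) denotes the binomial coefficient. (The left-hand side is a terminating ₂F₁(n−k, −n−m−1; n+m−2k; 1/a) with prefactor (−a)^{n+m+1}(1−a)^{k−m−n} Γ(2n+2m−2k+1)Γ(n−k)/(Γ(n+m−2k)Γ(−m+k+1)), and the inner sum on the right is the regularized terminating series (m−i+1)_{2i} · ₃F₂(k+2, −k−1, −i; −m−i, m−i+1; 1−a).) -/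

import Mathlib

open Finset

/-- The Pochhammer symbol `(z)_k = z(z+1)⋯(z+k−1)` for a real `z`. -/
def poch (z : ℝ) (k : ℕ) : ℝ := ∏ i ∈ Finset.range k, (z + (i : ℝ))

section
open PowerSeries

noncomputable def besselCoeff (p j : ℕ) : ℝ :=
  ((p + j).choose (2 * j) : ℝ) * ((2 * j).factorial : ℝ) / (j.factorial : ℝ)

theorem besselCoeff_of_lt {p j : ℕ} (h : p < j) : besselCoeff p j = 0 := by
  simp [besselCoeff, Nat.choose_eq_zero_of_lt (show p + j < 2 * j by omega)]

theorem besselCoeff_add (s j : ℕ) :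
    besselCoeff (s + j) j = ((s + 2 * j).factorial : ℝ) / (j.factorial * s.factorial) := by
  rw [besselCoeff, show s + j + j = s + 2 * j by ring,
    Nat.cast_choose ℝ (Nat.le_add_left (2 * j) s), Nat.add_sub_cancel]
  field_simp

theorem besselCoeff_zero_right (p : ℕ) : besselCoeff p 0 = 1 := by simp [besselCoeff]

theorem besselCoeff_succ_sub_raise (p j : ℕ) :
    besselCoeff (p + 1) (j + 1) - besselCoeff p (j + 1) =
      2 * (p + 1 + j) * besselCoeff p j := by
  obtain h | rfl | h := lt_trichotomy p j
  · simp [besselCoeff_of_lt h, besselCoeff_of_lt (show p < j + 1 by omega),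
      besselCoeff_of_lt (show p + 1 < j + 1 by omega)]
  · have h1 := besselCoeff_add 0 (p + 1)
    have h2 := besselCoeff_add 0 p
    rw [zero_add] at h1 h2
    rw [h1, h2, besselCoeff_of_lt (Nat.lt_succ_self p),
      show 0 + 2 * (p + 1) = (0 + 2 * p) + 1 + 1 by ring]
    simp only [Nat.factorial_succ, Nat.factorial_zero]
    push_cast
    field_simp
    ring
  · obtain ⟨s, rfl⟩ := Nat.exists_eq_add_of_lt h
    rw [show j + s + 1 + 1 = (s + 1) + (j + 1) by ring, besselCoeff_add,
      show j + s + 1 = s + (j + 1) by ring, besselCoeff_add,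
      show s + (j + 1) = (s + 1) + j by ring, besselCoeff_add,
      show s + 1 + 2 * (j + 1) = (s + 2 * j) + 1 + 1 + 1 by ring,
      show s + 2 * (j + 1) = (s + 2 * j) + 1 + 1 by ring,
      show s + 1 + 2 * j = (s + 2 * j) + 1 by ring]
    simp only [Nat.factorial_succ]
    push_cast
    field_simp
    ring

theorem besselCoeff_succ_sub_lower (p j : ℕ) :
    besselCoeff (p + 1) (j + 1) - besselCoeff p (j + 1) =
      2 * (p + 1 - j) * besselCoeff (p + 1) j := by
  rw [besselCoeff_succ_sub_raise]
  obtain h | rfl | h := lt_trichotomy j (p + 1)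
  · obtain ⟨s, rfl⟩ := Nat.exists_eq_add_of_le (Nat.lt_succ_iff.1 h)
    rw [show j + s + 1 = (s + 1) + j by ring, besselCoeff_add,
      show j + s = s + j by ring, besselCoeff_add,
      show s + 1 + 2 * j = (s + 2 * j) + 1 by ring]
    simp only [Nat.factorial_succ]
    push_cast
    field_simp
    ring
  · simp [besselCoeff_of_lt (Nat.lt_succ_self p)]
  · simp [besselCoeff_of_lt h, besselCoeff_of_lt (show p < j by omega)]

noncomputable def besselSeries (p : ℕ) (c : ℝ) : ℝ⟦X⟧ :=
  PowerSeries.mk fun j => besselCoeff p j * c ^ j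

theorem coeff_besselSeries (p : ℕ) (c : ℝ) (j : ℕ) :
    coeff j (besselSeries p c) = besselCoeff p j * c ^ j := coeff_mk _ _

theorem constantCoeff_besselSeries (p : ℕ) (c : ℝ) :
    constantCoeff (besselSeries p c) = 1 := by
  rw [← coeff_zero_eq_constantCoeff_apply, coeff_besselSeries, besselCoeff_zero_right, pow_zero,
    one_mul]

theorem besselSeries_zero (c : ℝ) : besselSeries 0 c = 1 := by
  ext (_ | j)
  · simp [coeff_besselSeries, besselCoeff_zero_right]
  · simp [coeff_besselSeries, besselCoeff_of_lt, coeff_one]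

theorem derivative_besselSeries_raise (p : ℕ) (c : ℝ) :
    C (2 * c) * (X ^ 2 * derivative ℝ (besselSeries p c)) =
      besselSeries (p + 1) c - (1 + C (2 * (p + 1) * c) * X) * besselSeries p c := by
  ext (_ | j)
  · simp [constantCoeff_besselSeries]
  · rw [add_mul, one_mul, mul_assoc, pow_two, mul_assoc]
    simp only [map_sub, map_add, coeff_C_mul, coeff_succ_X_mul, coeff_besselSeries]
    rcases j with _ | j
    · have := besselCoeff_succ_sub_raise p 0
      simp [besselCoeff_zero_right] at this ⊢
      linear_combination (-c) * this
    · simp only [coeff_succ_X_mul, coeff_derivative, coeff_besselSeries]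
      have := besselCoeff_succ_sub_raise p (j + 1)
      push_cast at this ⊢
      linear_combination (-c ^ (j + 2)) * this

theorem derivative_besselSeries_lower (p : ℕ) (c : ℝ) :
    C (2 * c) * (X ^ 2 * derivative ℝ (besselSeries (p + 1) c)) =
      besselSeries p c - (1 - C (2 * (p + 1) * c) * X) * besselSeries (p + 1) c := by
  ext (_ | j)
  · simp [constantCoeff_besselSeries]
  · rw [sub_mul, one_mul, mul_assoc, pow_two, mul_assoc]
    simp only [map_sub, coeff_C_mul, coeff_succ_X_mul, coeff_besselSeries]
    rcases j with _ | j
    · have := besselCoeff_succ_sub_lower p 0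
      simp [besselCoeff_zero_right] at this ⊢
      linear_combination c * this
    · simp only [coeff_succ_X_mul, coeff_derivative, coeff_besselSeries]
      have := besselCoeff_succ_sub_lower p (j + 1)
      push_cast at this ⊢
      linear_combination (c ^ (j + 2)) * this

theorem derivative_besselSeries_pred (M : ℕ) (c : ℝ) :
    C (2 * c) * (X ^ 2 * derivative ℝ (besselSeries (M - 1) c)) =
      besselSeries M c - (1 + C (2 * M * c) * X) * besselSeries (M - 1) c := by
  rcases M with _ | m
  · simp [besselSeries_zero]
  · simpa using derivative_besselSeries_raise m c

theorem coeff_besselSeries_triple (M n q N : ℕ) (a : ℝ) (hN : M + n = q + N + 1) :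
    (1 - a) * coeff (N + 1) (besselSeries M a * besselSeries (q + 1) (-(a * (1 - a))) *
        besselSeries n (1 - a)) +
      a * coeff (N + 1) (besselSeries (M - 1) a * besselSeries (q + 1) (-(a * (1 - a))) *
        besselSeries (n + 1) (1 - a)) -
      coeff (N + 1) (besselSeries (M - 1) a * besselSeries q (-(a * (1 - a))) *
        besselSeries n (1 - a)) =
    2 * (2 * N + 1) * (a * (1 - a)) *
      coeff N (besselSeries (M - 1) a * besselSeries (q + 1) (-(a * (1 - a))) *
        besselSeries n (1 - a)) := by
  have hA := derivative_besselSeries_pred M a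
  have hB := derivative_besselSeries_raise n (1 - a)
  have hC := derivative_besselSeries_lower q (-(a * (1 - a)))
  set A := besselSeries (M - 1) a
  set B := besselSeries n (1 - a)
  set D := besselSeries (q + 1) (-(a * (1 - a)))
  have hN' : (M : ℝ) + n = q + N + 1 := by exact_mod_cast hN
  have key : C (1 - a) * (besselSeries M a * D * B) + C a * (A * D * besselSeries (n + 1) (1 - a))
      - A * besselSeries q (-(a * (1 - a))) * B =
      C (2 * a * (1 - a)) * (X * (X * derivative ℝ (A * D * B))) +
        C (2 * a * (1 - a) * (N + 1)) * (X * (A * D * B)) := by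
    have hNC : (M : ℝ⟦X⟧) + n = q + N + 1 := by exact_mod_cast congrArg (Nat.cast (R := ℝ⟦X⟧)) hN
    rw [Derivation.leibniz, Derivation.leibniz]
    simp only [smul_eq_mul, map_add, map_sub, map_mul, map_neg, map_one, map_ofNat,
      map_natCast] at *
    linear_combination (-(1 - C a) * (D * B)) * hA - (C a * (A * D)) * hB + (A * B) * hC +
      (2 * C a * (1 - C a) * X * A * B * D) * hNC
  have h2 := congrArg (coeff (N + 1)) key
  rw [map_sub, map_add, map_add] at h2
  simp only [coeff_C_mul, coeff_succ_X_mul] at h2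
  rcases N with _ | N
  · rw [coeff_zero_X_mul] at h2
    push_cast at h2 ⊢
    linear_combination h2
  · rw [coeff_succ_X_mul, coeff_derivative] at h2
    push_cast at h2 ⊢
    linear_combination h2

noncomputable def geomCoeff (a : ℝ) (q d p : ℕ) : ℝ :=
  coeff p ((1 - C a * X) ^ q * (PowerSeries.mk 1 : ℝ⟦X⟧) ^ d)

theorem coeff_sub_mul_X (a : ℝ) (F : ℝ⟦X⟧) (p : ℕ) :
    coeff (p + 1) ((1 - C a * X) * F) = coeff (p + 1) F - a * coeff p F := by
  rw [sub_mul, one_mul, mul_assoc, map_sub, coeff_C_mul, coeff_succ_X_mul]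

theorem geomCoeff_succ_left (a : ℝ) (q d p : ℕ) :
    geomCoeff a (q + 1) d (p + 1) = geomCoeff a q d (p + 1) - a * geomCoeff a q d p := by
  rw [geomCoeff, pow_succ', mul_assoc, coeff_sub_mul_X, geomCoeff, geomCoeff]

theorem one_sub_X_mul_geom (d : ℕ) :
    (1 - X) * (PowerSeries.mk 1 : ℝ⟦X⟧) ^ (d + 1) = (PowerSeries.mk 1 : ℝ⟦X⟧) ^ d := by
  rw [pow_succ', ← mul_assoc, mul_comm (1 - X), mk_one_mul_one_sub_eq_one, one_mul]

theorem geomCoeff_succ_mid (a : ℝ) (q d p : ℕ) :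
    geomCoeff a q d (p + 1) = geomCoeff a q (d + 1) (p + 1) - geomCoeff a q (d + 1) p := by
  have h := coeff_sub_mul_X 1 ((1 - C a * X) ^ q * (PowerSeries.mk 1 : ℝ⟦X⟧) ^ (d + 1)) p
  rw [map_one, one_mul, one_mul, mul_left_comm, one_sub_X_mul_geom] at h
  exact h

theorem geomCoeff_zero_right (a : ℝ) (q d : ℕ) : geomCoeff a q d 0 = 1 := by
  have h : constantCoeff (PowerSeries.mk 1 : ℝ⟦X⟧) = 1 := by
    rw [← coeff_zero_eq_constantCoeff_apply, coeff_mk, Pi.one_apply]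
  rw [geomCoeff, coeff_zero_eq_constantCoeff_apply]
  simp [h]

theorem geomCoeff_symm (a : ℝ) (p q : ℕ) :
    geomCoeff a q (q + 1) p = geomCoeff a p (p + 1) q := by
  have h0 (p : ℕ) : geomCoeff a 0 (0 + 1) p = 1 := by simp [geomCoeff]
  induction p generalizing q with
  | zero => rw [geomCoeff_zero_right, h0]
  | succ p ihp =>
    induction q with
    | zero => rw [geomCoeff_zero_right, h0]
    | succ q ihq =>
      have h1 := geomCoeff_succ_mid a (q + 1) (q + 1) p
      have h2 := geomCoeff_succ_left a q (q + 1) p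
      have h3 := geomCoeff_succ_mid a (p + 1) (p + 1) q
      have h4 := geomCoeff_succ_left a p (p + 1) q
      linear_combination h2 - h1 + h3 - h4 + ihp (q + 1) + ihq - a * ihp q

theorem geomCoeff_add (a : ℝ) (d p j : ℕ) :
    geomCoeff a (j + d) (d + 1) (p + j) = (1 - a) ^ j * geomCoeff a p (p + j + 1) d := by
  induction j generalizing p with
  | zero => simpa using geomCoeff_symm a p d
  | succ j ih =>
    rw [show j + 1 + d = j + d + 1 by ring, ← add_assoc, geomCoeff_succ_left, ih,
      show p + j + 1 = p + 1 + j by ring, ih]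
    rcases d with _ | d
    · simp only [geomCoeff_zero_right]; ring
    · have h1 := geomCoeff_succ_left a p (p + 1 + j + 1) d
      have h2 := geomCoeff_succ_mid a p (p + 1 + j) d
      rw [h1, h2]
      ring

theorem coeff_one_sub_mul_X_pow (a : ℝ) (q r : ℕ) :
    coeff r ((1 - C a * X) ^ q : ℝ⟦X⟧) = (q.choose r : ℝ) * (-a) ^ r := by
  induction q generalizing r with
  | zero => rcases r with _ | r <;> simp [coeff_one]
  | succ q ih =>
    rcases r with _ | r
    · simp
    · rw [pow_succ', coeff_sub_mul_X, ih, ih, Nat.choose_succ_succ]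
      push_cast
      ring

theorem geomCoeff_eq_sum (a : ℝ) (q d p : ℕ) :
    geomCoeff a q (d + 1) p =
      ∑ r ∈ range (p + 1), (q.choose r : ℝ) * (-a) ^ r * ((d + (p - r)).choose d : ℝ) := by
  rw [geomCoeff, coeff_mul, Finset.Nat.sum_antidiagonal_eq_sum_range_succ_mk]
  refine sum_congr rfl fun r _ => ?_
  rw [coeff_one_sub_mul_X_pow, mk_one_pow_eq_mk_choose_add, coeff_mk]

theorem besselCoeff_mul_besselCoeff (d N l : ℕ) (hd : l ≤ d) (hN : l ≤ N) :
    (N.factorial : ℝ) * (besselCoeff d l * besselCoeff (d + N) (N - l)) =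
      (2 * N).factorial * ((N.choose l : ℝ) * ((2 * N + (d - l)).choose (2 * N) : ℝ)) := by
  obtain ⟨u, rfl⟩ := Nat.exists_eq_add_of_le' hd
  obtain ⟨v, rfl⟩ := Nat.exists_eq_add_of_le' hN
  rw [Nat.add_sub_cancel, Nat.add_sub_cancel, besselCoeff_add,
    show u + l + (v + l) = u + l + l + v by ring, besselCoeff_add, Nat.cast_add_choose,
    show (v + l).choose l = (v + l).choose v from Nat.choose_symm_add.symm,
    Nat.cast_add_choose, show u + l + l + 2 * v = 2 * (v + l) + u by ring,
    show u + l + l = u + 2 * l by ring]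
  field_simp

theorem coeff_besselSeries_mul (a : ℝ) (d N : ℕ) :
    (N.factorial : ℝ) * coeff N (besselSeries d (-(a * (1 - a))) * besselSeries (d + N) (1 - a)) =
      (2 * N).factorial * geomCoeff a (N + d) (d + 1) (2 * N) := by
  rw [two_mul, geomCoeff_add, ← two_mul, geomCoeff_eq_sum, coeff_mul,
    Finset.Nat.sum_antidiagonal_eq_sum_range_succ_mk, mul_sum, mul_sum, mul_sum]
  have e1 : range (min N d + 1) ⊆ range (N + 1) := by intro x; simp; omega
  have e2 : range (min N d + 1) ⊆ range (d + 1) := by intro x; simp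
  rw [← sum_subset e1, ← sum_subset e2]
  · refine sum_congr rfl fun l hl => ?_
    have hl' : l ≤ N ∧ l ≤ d := by have := mem_range.1 hl; omega
    have h := besselCoeff_mul_besselCoeff d N l hl'.2 hl'.1
    rw [coeff_besselSeries, coeff_besselSeries]
    have hp : (1 - a) ^ N = (1 - a) ^ l * (1 - a) ^ (N - l) := by
      rw [← pow_add, Nat.add_sub_cancel' hl'.1]
    rw [hp, ← neg_mul, mul_pow]
    linear_combination ((-a) ^ l * (1 - a) ^ l * (1 - a) ^ (N - l)) * h
  · intro l h1 h2
    have : N < l := by simp at h1 h2; omega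
    simp [Nat.choose_eq_zero_of_lt this]
  · intro l h1 h2
    have : d < l := by simp at h1 h2; omega
    simp [coeff_besselSeries, besselCoeff_of_lt this]

theorem geomCoeff_relation (a : ℝ) (q d p : ℕ) :
    (1 - a) * geomCoeff a (q + 1) (d + 1) (p + 2) + a * geomCoeff a (q + 1) (d + 2) (p + 2) -
      geomCoeff a q (d + 1) (p + 2) = a * (1 - a) * geomCoeff a q (d + 2) p := by
  rw [geomCoeff_succ_left, geomCoeff_succ_left, geomCoeff_succ_mid a q (d + 1) (p + 1),
    geomCoeff_succ_mid a q (d + 1) p]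
  ring

theorem coeff_besselSeries_triple_eq (a : ℝ) (ha : a ≠ 1) (M d e : ℕ) :
    ((M + e).factorial : ℝ) * coeff (M + e) (besselSeries (M - 1) a *
        besselSeries (M + d) (-(a * (1 - a))) * besselSeries (M + d + e) (1 - a)) =
      (2 * (M + e)).factorial * geomCoeff a (M + (M + d + e)) (d + 1) (2 * (M + e)) := by
  induction M generalizing d e with
  | zero => simpa [besselSeries_zero, add_comm e d] using coeff_besselSeries_mul a d e
  | succ M ih =>
    have hb : 1 - a ≠ 0 := sub_ne_zero.2 ha.symm
    have h1 := ih (d + 1) (e + 1)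
    have h2 := ih d (e + 1)
    have h3 := ih (d + 1) e
    have h4 := coeff_besselSeries_triple M (M + 1 + d + e) (M + d) (M + e) a (by ring)
    have h5 := geomCoeff_relation a (M + (M + 1 + d + e)) d (2 * (M + e))
    rw [show M + (d + 1) = M + d + 1 by ring, show M + (e + 1) = M + e + 1 by ring,
      show M + d + 1 + (e + 1) = M + 1 + d + e + 1 by ring,
      show 2 * (M + e + 1) = 2 * (M + e) + 1 + 1 by ring] at h1
    rw [show M + (e + 1) = M + e + 1 by ring,
      show M + d + (e + 1) = M + 1 + d + e by ring,
      show 2 * (M + e + 1) = 2 * (M + e) + 1 + 1 by ring] at h2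
    rw [show M + (d + 1) = M + d + 1 by ring,
      show M + d + 1 + e = M + 1 + d + e by ring] at h3
    rw [show M + 1 + e = M + e + 1 by ring, show M + 1 + d + e = M + 1 + d + e by ring,
      show 2 * (M + e + 1) = 2 * (M + e) + 1 + 1 by ring, Nat.add_sub_cancel,
      show M + 1 + d = M + d + 1 by ring] at *
    rw [show M + 1 + (M + d + 1 + e) = M + (M + d + 1 + e) + 1 by ring]
    rw [show M + (M + d + 1 + e + 1) = M + (M + d + 1 + e) + 1 by ring] at h1
    apply mul_left_cancel₀ hb
    simp only [Nat.factorial_succ] at *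
    push_cast at *
    linear_combination ((M + e + 1) * (M + e).factorial : ℝ) * h4 - a * h1 + h2 +
      2 * (2 * (M + e) + 1) * (a * (1 - a)) * (M + e + 1) * h3 -
      ((2 * (M + e) + 1 + 1) * (2 * (M + e) + 1) * (2 * (M + e)).factorial : ℝ) * h5

end

theorem poch_natCast_add_one (x r : ℕ) :
    poch ((x : ℝ) + 1) r = ((x + r).factorial : ℝ) / x.factorial := by
  induction r with
  | zero => simp [poch, Nat.factorial_ne_zero]
  | succ r ih =>
    rw [poch, prod_range_succ, ← poch, ih, ← add_assoc, Nat.factorial_succ]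
    push_cast
    ring

theorem poch_neg_natCast (x r : ℕ) : poch (-(x : ℝ)) r = (-1) ^ r * r.factorial * x.choose r := by
  induction r with
  | zero => simp [poch]
  | succ r ih =>
    rw [poch, prod_range_succ, ← poch, ih]
    have h : (x.choose (r + 1) : ℝ) * (r + 1) = x.choose r * (x - r) := by
      obtain h | h := le_total r x
      · have := Nat.choose_succ_right_eq x r
        rw [← Nat.cast_sub h]
        exact_mod_cast this
      · obtain rfl | h := h.eq_or_lt
        · simp
        · simp [Nat.choose_eq_zero_of_lt h, Nat.choose_eq_zero_of_lt (h.trans (Nat.lt_succ_self r))]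
    rw [Nat.factorial_succ]
    push_cast
    linear_combination (-(-1) ^ (r + 1) * (r.factorial : ℝ)) * h

theorem poch_mul_poch_neg_div_factorial (p l : ℕ) :
    poch ((p : ℝ) + 1) l * poch (-(p : ℝ)) l / l.factorial = (-1) ^ l * besselCoeff p l := by
  rw [poch_natCast_add_one, poch_neg_natCast]
  obtain h | h := lt_or_ge p l
  · simp [besselCoeff_of_lt h, Nat.choose_eq_zero_of_lt h]
  · obtain ⟨u, rfl⟩ := Nat.exists_eq_add_of_le' h
    rw [besselCoeff_add, Nat.cast_choose ℝ h, Nat.add_sub_cancel,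
      show u + l + l = u + 2 * l by ring]
    field_simp

theorem poch_eq_zero (x r : ℕ) (h : x < r) : poch (-(x : ℝ)) r = 0 := by
  simp [poch_neg_natCast, Nat.choose_eq_zero_of_lt h]

theorem poch_neg_div_mul_poch (m j l : ℕ) :
    poch (-((j + l : ℕ) : ℝ)) l / poch (-((m + (j + l) : ℕ) : ℝ)) l *
        poch ((m : ℝ) - j + 1) (2 * j + l) =
      (j + l).factorial * besselCoeff m j := by
  obtain h | h := lt_or_ge m j
  · obtain ⟨u, rfl⟩ := Nat.exists_eq_add_of_lt h
    have := poch_eq_zero u (2 * (m + u + 1) + l) (by omega)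
    rw [besselCoeff_of_lt h, show (m : ℝ) - (m + u + 1 : ℕ) + 1 = -(u : ℝ) by push_cast; ring, this]
    simp
  · obtain ⟨u, rfl⟩ := Nat.exists_eq_add_of_le' h
    rw [show ((u + j : ℕ) : ℝ) - j + 1 = u + 1 by push_cast; ring, poch_natCast_add_one,
      poch_neg_natCast, poch_neg_natCast, besselCoeff_add, ← add_assoc (u + j) j l,
      Nat.cast_choose ℝ (Nat.le_add_left l j), Nat.cast_choose ℝ (Nat.le_add_left l (u + j + j)),
      Nat.add_sub_cancel, Nat.add_sub_cancel, show u + (2 * j + l) = u + j + j + l by ring,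
      show u + 2 * j = u + j + j by ring]
    field_simp

theorem choose_mul_poch (d N i : ℕ) (h : i ≤ N) :
    (N.choose i : ℝ) * poch (((d + i : ℕ) : ℝ) + 1) (2 * (N - i)) * i.factorial =
      N.factorial * besselCoeff (d + N) (N - i) := by
  obtain ⟨u, rfl⟩ := Nat.exists_eq_add_of_le' h
  rw [Nat.add_sub_cancel, poch_natCast_add_one, show d + (u + i) = d + i + u by ring,
    besselCoeff_add, Nat.cast_choose ℝ h, Nat.add_sub_cancel]
  field_simp

theorem pow_mul_geomCoeff_eq (a : ℝ) (ha : a ≠ 0) (d f P : ℕ) :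
    geomCoeff a P (d + 1) (P + f) =
      (-a) ^ P * ((d + f).factorial / (f.factorial * d.factorial)) *
      ∑ s ∈ range (P + 1), poch (((d + f : ℕ) : ℝ) + 1) s * poch (-(P : ℝ)) s /
          (poch ((f : ℝ) + 1) s * (s.factorial : ℝ)) * a ^ (-(s : ℤ)) := by
  have hsub : range (P + 1) ⊆ range (P + f + 1) := by intro x; simp; omega
  rw [geomCoeff_eq_sum, ← sum_subset hsub, ← sum_flip, mul_sum]
  · refine sum_congr rfl fun s hs => ?_
    have hs' : s ≤ P := Nat.lt_succ_iff.1 (mem_range.1 hs)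
    obtain ⟨u, rfl⟩ := Nat.exists_eq_add_of_le' hs'
    rw [Nat.add_sub_cancel, show u + s + f - u = f + s by omega,
      poch_natCast_add_one, poch_natCast_add_one, poch_neg_natCast,
      show (u + s).choose s = (u + s).choose u from Nat.choose_symm_add.symm,
      Nat.cast_add_choose, Nat.cast_add_choose, zpow_neg, zpow_natCast, ← add_assoc d, pow_add, neg_pow a s]
    have h1 : ((-1 : ℝ) ^ s) ^ 2 = 1 := by rw [← pow_mul, mul_comm, pow_mul]; simp
    field_simp
    rw [h1, mul_one]
  · intro r _ h2
    have : P < r := by simp at h2; omega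
    simp [Nat.choose_eq_zero_of_lt this]

theorem sum_eq_coeff_besselSeries (a : ℝ) (ha : a ≠ 1) (d m k N : ℕ) (hk : k = m + d) :
    (1 - a) ^ N * ∑ i ∈ range (N + 1),
      a ^ i * (N.choose i : ℝ) *
        poch (-(m : ℝ) + (k : ℝ) + (i : ℝ) + 1) (2 * (N - i)) *
        (1 - a) ^ (-(i : ℤ)) *
      ∑ l ∈ range (i + 1),
        poch ((k : ℝ) + 2) l * poch (-(k : ℝ) - 1) l * poch (-(i : ℝ)) l /
            (poch (-(m : ℝ) - (i : ℝ)) l * (l.factorial : ℝ)) *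
          poch ((m : ℝ) - (i : ℝ) + 1 + (l : ℝ)) (2 * i - l) * (1 - a) ^ l =
    N.factorial * PowerSeries.coeff N (besselSeries m a *
      besselSeries (k + 1) (-(a * (1 - a))) * besselSeries (d + N) (1 - a)) := by
  have hb : 1 - a ≠ 0 := sub_ne_zero.2 ha.symm
  rw [mul_comm (besselSeries m a), PowerSeries.coeff_mul,
    Finset.Nat.sum_antidiagonal_eq_sum_range_succ_mk, mul_sum, mul_sum]
  refine sum_congr rfl fun i hi => ?_
  have hi' : i ≤ N := Nat.lt_succ_iff.1 (mem_range.1 hi)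
  have hcoef := choose_mul_poch d N i hi'
  rw [coeff_besselSeries, PowerSeries.coeff_mul,
    Finset.Nat.sum_antidiagonal_eq_sum_range_succ_mk,
    show -(m : ℝ) + k + i + 1 = ((d + i : ℕ) : ℝ) + 1 by rw [hk]; push_cast; ring]
  have hin : ∑ l ∈ range (i + 1),
        poch ((k : ℝ) + 2) l * poch (-(k : ℝ) - 1) l * poch (-(i : ℝ)) l /
            (poch (-(m : ℝ) - (i : ℝ)) l * (l.factorial : ℝ)) *
          poch ((m : ℝ) - (i : ℝ) + 1 + (l : ℝ)) (2 * i - l) * (1 - a) ^ l =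
      ∑ l ∈ range (i + 1), (i.factorial : ℝ) *
        (besselCoeff (k + 1) l * besselCoeff m (i - l) * (-1) ^ l * (1 - a) ^ l) := by
    refine sum_congr rfl fun l hl => ?_
    obtain ⟨j, rfl⟩ := Nat.exists_eq_add_of_le' (Nat.lt_succ_iff.1 (mem_range.1 hl))
    have h1 := poch_mul_poch_neg_div_factorial (k + 1) l
    have h2 := poch_neg_div_mul_poch m j l
    rw [Nat.add_sub_cancel, show 2 * (j + l) - l = 2 * j + l by omega,
      show (k : ℝ) + 2 = ((k + 1 : ℕ) : ℝ) + 1 by push_cast; ring,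
      show -(k : ℝ) - 1 = -((k + 1 : ℕ) : ℝ) by push_cast; ring,
      show -(m : ℝ) - (j + l : ℕ) = -((m + (j + l) : ℕ) : ℝ) by push_cast; ring,
      show (m : ℝ) - (j + l : ℕ) + 1 + l = (m : ℝ) - j + 1 by push_cast; ring]
    calc _ = (poch (((k + 1 : ℕ) : ℝ) + 1) l * poch (-((k + 1 : ℕ) : ℝ)) l / l.factorial) *
          (poch (-((j + l : ℕ) : ℝ)) l / poch (-((m + (j + l) : ℕ) : ℝ)) l *
            poch ((m : ℝ) - j + 1) (2 * j + l)) * (1 - a) ^ l := by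
          simp only [div_eq_mul_inv, mul_inv]; ring
      _ = _ := by rw [h1, h2]; ring
  have hp : (1 - a) ^ N * (1 - a) ^ (-(i : ℤ)) = (1 - a) ^ (N - i) := by
    rw [zpow_neg, zpow_natCast, ← div_eq_mul_inv, div_eq_iff (pow_ne_zero _ hb), ← pow_add,
      Nat.sub_add_cancel hi']
  rw [hin, ← mul_sum]
  have hout : ∑ l ∈ range (i + 1),
      PowerSeries.coeff l (besselSeries (k + 1) (-(a * (1 - a)))) *
        PowerSeries.coeff (i - l) (besselSeries m a) =
      a ^ i * ∑ l ∈ range (i + 1),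
        besselCoeff (k + 1) l * besselCoeff m (i - l) * (-1) ^ l * (1 - a) ^ l := by
    rw [mul_sum]
    refine sum_congr rfl fun l hl => ?_
    have hl' : l ≤ i := Nat.lt_succ_iff.1 (mem_range.1 hl)
    rw [coeff_besselSeries, coeff_besselSeries, neg_pow, mul_pow,
      show a ^ i = a ^ l * a ^ (i - l) by rw [← pow_add, Nat.add_sub_cancel' hl']]
    ring
  rw [hout]
  generalize ∑ l ∈ range (i + 1),
    besselCoeff (k + 1) l * besselCoeff m (i - l) * (-1) ^ l * (1 - a) ^ l = S
  calc _ = ((1 - a) ^ N * (1 - a) ^ (-(i : ℤ))) * ((N.choose i : ℝ) *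
        poch (((d + i : ℕ) : ℝ) + 1) (2 * (N - i)) * i.factorial) * (a ^ i * S) := by ring
    _ = _ := by rw [hp, hcoef]; ring

/-- Reduction of a sum of terminating `₃F₂`'s to a terminating `₂F₁`, in the range
`m ≤ k`, `2k ≤ n+m−1`: the left-hand side is
`(−a)^{n+m+1} (1−a)^{k−m−n} (Γ(2n+2m−2k+1)Γ(n−k)/(Γ(n+m−2k)Γ(k−m+1)))
  ₂F₁(n−k, −n−m−1; n+m−2k; 1/a)`
and the inner sums on the right are the regularized terminating series
`(m−i+1)_{2i} ⬝ ₃F₂(k+2, −k−1, −i; −m−i, m−i+1; 1−a)`. -/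
theorem sum_3F2_reduction_low (n m k : ℕ) (hk1 : m ≤ k) (hk2 : 2 * k + 1 ≤ n + m)
    (a : ℝ) (ha0 : a ≠ 0) (ha1 : a ≠ 1) :
    (-a) ^ (n + m + 1) * (1 - a) ^ ((k : ℤ) - (m : ℤ) - (n : ℤ)) *
        ((((2 * n + 2 * m - 2 * k).factorial : ℝ) * ((n - k - 1).factorial : ℝ)) /
          (((n + m - 2 * k - 1).factorial : ℝ) * ((k - m).factorial : ℝ))) *
      (∑ s ∈ Finset.range (n + m + 2),
        poch ((n : ℝ) - (k : ℝ)) s * poch (-(n : ℝ) - (m : ℝ) - 1) s /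
            (poch ((n : ℝ) + (m : ℝ) - 2 * (k : ℝ)) s * (s.factorial : ℝ)) *
          a ^ (-(s : ℤ))) =
    ∑ i ∈ Finset.range (m + n - k + 1),
      a ^ i * ((m + n - k).choose i : ℝ) *
        poch (-(m : ℝ) + (k : ℝ) + (i : ℝ) + 1) (2 * (m + n - k - i)) *
        (1 - a) ^ (-(i : ℤ)) *
      ∑ l ∈ Finset.range (i + 1),
        poch ((k : ℝ) + 2) l * poch (-(k : ℝ) - 1) l * poch (-(i : ℝ)) l /
            (poch (-(m : ℝ) - (i : ℝ)) l * (l.factorial : ℝ)) *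
          poch ((m : ℝ) - (i : ℝ) + 1 + (l : ℝ)) (2 * i - l) * (1 - a) ^ l := by
  obtain ⟨d, rfl⟩ := Nat.exists_eq_add_of_le hk1
  obtain ⟨f, hf⟩ := Nat.exists_eq_add_of_le hk2
  obtain rfl : n = m + 1 + d + (d + f) := by omega
  have hb : 1 - a ≠ 0 := sub_ne_zero.2 ha1.symm
  have hR := sum_eq_coeff_besselSeries a ha1 d m (m + d) (m + 1 + (d + f)) rfl
  have hM := coeff_besselSeries_triple_eq a ha1 (m + 1) d (d + f)
  have hL := pow_mul_geomCoeff_eq a ha0 d f (m + 1 + d + (d + f) + m + 1)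
  rw [Nat.add_sub_cancel, show m + 1 + d + (d + f) = d + (m + 1 + (d + f)) by ring,
    show m + 1 + d = m + d + 1 by ring, ← hR,
    show m + 1 + (d + (m + 1 + (d + f))) = m + 1 + d + (d + f) + m + 1 by ring,
    show 2 * (m + 1 + (d + f)) = m + 1 + d + (d + f) + m + 1 + f by ring, hL] at hM
  rw [show m + (m + 1 + d + (d + f)) - (m + d) = m + 1 + (d + f) by omega]
  apply mul_left_cancel₀ (pow_ne_zero (m + 1 + (d + f)) hb)
  rw [hM, show 2 * (m + 1 + d + (d + f)) + 2 * m - 2 * (m + d) =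
      m + 1 + d + (d + f) + m + 1 + f by omega,
    show m + 1 + d + (d + f) - (m + d) - 1 = d + f by omega,
    show m + 1 + d + (d + f) + m - 2 * (m + d) - 1 = f by omega,
    show m + d - m = d by omega,
    show ((m + 1 + d + (d + f) : ℕ) : ℝ) - (m + d : ℕ) = ((d + f : ℕ) : ℝ) + 1 by push_cast; ring,
    show -((m + 1 + d + (d + f) : ℕ) : ℝ) - m - 1 = -((m + 1 + d + (d + f) + m + 1 : ℕ) : ℝ) by
      push_cast; ring,
    show ((m + 1 + d + (d + f) : ℕ) : ℝ) + m - 2 * (m + d : ℕ) = (f : ℝ) + 1 by push_cast; ring,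
    show ((m + d : ℕ) : ℤ) - m - (m + 1 + d + (d + f) : ℕ) = -((m + 1 + (d + f) : ℕ) : ℤ) by
      push_cast; ring, zpow_neg, zpow_natCast]
  have hN := pow_ne_zero (m + 1 + (d + f)) hb
  field_simp
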